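/- (Extended Bernstein inequality for unbounded variables.) Let {Z(s) : s ∈ Z^N} be a strong mixing random field with E[Z(s)] = 0, E[Z(s)²] ≤ σ² < ∞, whose tail distribution satisfies P(|Z(s)| > z) ≤ κ0·exp(−κ1·z^τ) for constants κ0, κ1, τ > 0. Then, with the blocking notation ñ, P̃, q̲, p̄, ᾱ_k as in the Bernstein inequality for spatial lattice processes, for any B > 0 and ε > 0 and any admissible β > 0 (with 2^{N+1}·B·P̃·e·β < 1): P( |Σ_{s∈I_n} Z(s)| > ε ) ≤ (12/(ε·τ))·κ0·κ1^{−1/τ}·Γ(1/τ, κ1·B^τ)·|I_n| + 2·exp{ 12√e·2^N·(ñ/P̃)·α(q̲)^{P̃/[ñ(2^N+1)]} } · exp{ −βε/3 } · exp{ 2^{3N}·β²·e·(σ² + 48·B²·γ·ᾱ_{p̄})·ñ }, where Γ denotes the upper incomplete gamma function and γ is a constant depending only on N. -/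

import Mathlib

open MeasureTheory Filter

noncomputable section

/-- `ℓ∞`-distance between two lattice points of `ℤ^N`. -/
def latDist {N : ℕ} (s t : Fin N → ℤ) : ℕ := Finset.univ.sup fun i => (s i - t i).natAbs

/-- The σ-algebra generated by the random variables `Z(s)`, `s ∈ I`. -/
def fieldSigma {N : ℕ} {Ω E : Type*} [MeasurableSpace E]
    (Z : (Fin N → ℤ) → Ω → E) (I : Set (Fin N → ℤ)) : MeasurableSpace Ω :=
  ⨆ s ∈ I, MeasurableSpace.comap (Z s) inferInstance

/-- The spatial α-mixing coefficient. -/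
def alphaMix {N : ℕ} {Ω E : Type*} [MeasurableSpace Ω] [MeasurableSpace E]
    (P : Measure Ω) (Z : (Fin N → ℤ) → Ω → E) (k : ℕ) : ℝ :=
  sSup { x : ℝ | ∃ I J : Set (Fin N → ℤ),
    (∀ s ∈ I, ∀ t ∈ J, k ≤ latDist s t) ∧
    ∃ A B : Set Ω, MeasurableSet[fieldSigma Z I] A ∧ MeasurableSet[fieldSigma Z J] B ∧
      x = |(P (A ∩ B)).toReal - (P A).toReal * (P B).toReal| }

/-- `ᾱ_k = Σ_{u=1}^k u^{N−1} α(u)`. -/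
def abar {N : ℕ} {Ω E : Type*} [MeasurableSpace Ω] [MeasurableSpace E]
    (P : Measure Ω) (Z : (Fin N → ℤ) → Ω → E) (k : ℕ) : ℝ :=
  ∑ u ∈ Finset.Icc 1 k, (u : ℝ) ^ (N - 1) * alphaMix P Z u

/-- The observation window `I_n = {s ∈ ℤ^N : e_N ≤ s ≤ n}`. -/
def obsIdx {N : ℕ} (n : Fin N → ℕ) : Finset (Fin N → ℤ) :=
  Finset.Icc (fun _ => 1) (fun i => (n i : ℤ))

/-- The upper incomplete gamma function `Γ(a,x) = ∫_x^∞ t^{a−1} e^{−t} dt`. -/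
def uGamma (a x : ℝ) : ℝ := ∫ t in Set.Ioi x, t ^ (a - 1) * Real.exp (-t)

/-!
The variables are truncated to `[-B, B]` and centred. The remainders are controlled in `L¹`: their
sum is large with small probability by Markov's inequality, and the integral of the tail bound over
`(B, ∞)` is an incomplete gamma function.

For the bounded field, `ℤ^N` is tiled by boxes of sides `p i + q i`, each coordinate of a box being
split into a part of length `p i` and one of length `q i ≤ p i`. This gives `2 ^ N` families of
blocks such that two blocks of one family are at distance at least `q`. Jensen's inequality bounds
the moment generating function of the sum over the window by that of `2 ^ N` times the sum over one
family. Within a family the moment generating function factors over the blocks up to an error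
`α(q) exp c` to a power of the number `R` of blocks; writing `α = (α ^ x) ^ (R + 1)`, either
`α ^ x ≤ exp (-c)` absorbs this growth, or `α ^ x` is so large that the trivial bound `exp (R c)`
suffices. A block sum has variance of the order of its number of points, since the covariances
decay like `α` and spheres of radius `u` in `ℤ^N` have `O(u ^ (N - 1))` points.
-/

open ProbabilityTheory

/-- `α` bounds the strong-mixing (Rosenblatt) dependence of the σ-algebras `m₁` and `m₂` under `P`.
Only the bound is recorded, so that it can be weakened without reference to a supremum. -/
def IsMixingBound {Ω : Type*} {_ : MeasurableSpace Ω} (P : Measure Ω) (m₁ m₂ : MeasurableSpace Ω)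
    (α : ℝ) : Prop :=
  ∀ A B, MeasurableSet[m₁] A → MeasurableSet[m₂] B →
    |P.real (A ∩ B) - P.real A * P.real B| ≤ α

section Covariance

variable {Ω : Type*} {m m₁ m₂ m₀ : MeasurableSpace Ω} {P : Measure Ω}

theorem integrable_of_measurable_of_mem_Icc [IsFiniteMeasure P] {X : Ω → ℝ} {a b : ℝ}
    (hX : Measurable X) (h : ∀ ω, X ω ∈ Set.Icc a b) : Integrable X P :=
  .of_mem_Icc a b hX.aemeasurable (.of_forall h)

theorem integrableOn_measureReal_le (μ : Measure Ω) [IsFiniteMeasure μ] (f : Ω → ℝ) (b : ℝ) :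
    IntegrableOn (fun t => μ.real {ω | t ≤ f ω}) (Set.Ioc 0 b) := by
  have hanti : Antitone fun t => μ.real {ω | t ≤ f ω} :=
    fun _ _ hst => measureReal_mono fun _ hω => hst.trans hω
  exact ((hanti.antitoneOn _).integrableOn_isCompact isCompact_Icc).mono_set
    Set.Ioc_subset_Icc_self

-- Layer cake: both integrals are integrals over `(0, b]` of the measures of the superlevel sets.
theorem abs_integral_sub_integral_le_of_abs_measureReal_sub_le (hm : m ≤ m₀) (μ ν : Measure Ω)
    [IsFiniteMeasure μ] [IsFiniteMeasure ν] {b c : ℝ} (hb : 0 ≤ b)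
    (h : ∀ A, MeasurableSet[m] A → |μ.real A - ν.real A| ≤ c) {f : Ω → ℝ} (hf : Measurable[m] f)
    (hfb : ∀ ω, f ω ∈ Set.Icc 0 b) :
    |∫ ω, f ω ∂μ - ∫ ω, f ω ∂ν| ≤ c * b := by
  have layerCake (ρ : Measure Ω) [IsFiniteMeasure ρ] :
      ∫ ω, f ω ∂ρ = ∫ t in Set.Ioc 0 b, ρ.real {ω | t ≤ f ω} :=
    (integrable_of_measurable_of_mem_Icc (hf.mono hm le_rfl) hfb).integral_eq_integral_Ioc_meas_le
      (.of_forall fun ω => (hfb ω).1) (.of_forall fun ω => (hfb ω).2)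
  rw [layerCake μ, layerCake ν,
    ← integral_sub (integrableOn_measureReal_le μ f b) (integrableOn_measureReal_le ν f b)]
  simpa [Measure.real, hb] using norm_setIntegral_le_of_norm_le_const
    (μ := volume) (s := Set.Ioc 0 b) (f := fun t => μ.real {ω | t ≤ f ω} - ν.real {ω | t ≤ f ω})
    measure_Ioc_lt_top
    fun t _ => h _ (hf measurableSet_Ici)

variable {α : ℝ} [IsProbabilityMeasure P]

namespace IsMixingBound

theorem abs_setIntegral_sub_le (hα : IsMixingBound P m₁ m₂ α) (h₂ : m₂ ≤ m₀)
    {A : Set Ω} (hA : MeasurableSet[m₁] A) {b : ℝ} (hb : 0 ≤ b) {Y : Ω → ℝ}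
    (hY : Measurable[m₂] Y) (hYb : ∀ ω, Y ω ∈ Set.Icc 0 b) :
    |∫ ω in A, Y ω ∂P - P.real A * ∫ ω, Y ω ∂P| ≤ α * b := by
  have := P.smul_finite (measure_ne_top P A)
  have key := abs_integral_sub_integral_le_of_abs_measureReal_sub_le h₂ (P.restrict A) (P A • P) hb
    (fun B hB => by
      rw [measureReal_restrict_apply (h₂ _ hB), Set.inter_comm, measureReal_ennreal_smul_apply]
      exact hα A B hA hB) hY hYb
  rwa [integral_smul_measure] at key

-- Compare `P.withDensity Y` with the multiple of `P` of the same mass, first on sets, then on `X`.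
theorem abs_integral_mul_sub_le (hα : IsMixingBound P m₁ m₂ α) (h₁ : m₁ ≤ m₀) (h₂ : m₂ ≤ m₀)
    {a b : ℝ} (ha : 0 ≤ a) (hb : 0 ≤ b) {X Y : Ω → ℝ} (hX : Measurable[m₁] X)
    (hY : Measurable[m₂] Y) (hXa : ∀ ω, X ω ∈ Set.Icc 0 a) (hYb : ∀ ω, Y ω ∈ Set.Icc 0 b) :
    |∫ ω, X ω * Y ω ∂P - (∫ ω, X ω ∂P) * ∫ ω, Y ω ∂P| ≤ α * a * b := by
  have hYm : Measurable Y := hY.mono h₂ le_rfl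
  have hYint : Integrable Y P := integrable_of_measurable_of_mem_Icc hYm hYb
  have hY0 (ω : Ω) : 0 ≤ Y ω := (hYb ω).1
  have hEY : 0 ≤ ∫ ω, Y ω ∂P := integral_nonneg hY0
  have : IsFiniteMeasure (P.withDensity fun ω => ENNReal.ofReal (Y ω)) :=
    isFiniteMeasure_withDensity_ofReal hYint.2
  have := P.smul_finite (ENNReal.ofReal_ne_top (r := ∫ ω, Y ω ∂P))
  have key := abs_integral_sub_integral_le_of_abs_measureReal_sub_le h₁
    (P.withDensity fun ω => ENNReal.ofReal (Y ω)) (ENNReal.ofReal (∫ ω, Y ω ∂P) • P) ha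
    (fun A hA => by
      rw [measureReal_ennreal_smul_apply, ENNReal.toReal_ofReal hEY, Measure.real,
        withDensity_apply _ (h₁ _ hA), ← ofReal_integral_eq_lintegral_ofReal hYint.integrableOn
          (.of_forall hY0), ENNReal.toReal_ofReal (integral_nonneg hY0), mul_comm]
      exact hα.abs_setIntegral_sub_le h₂ hA hb hY hYb) hX hXa
  rw [integral_smul_measure, ENNReal.toReal_ofReal hEY,
    integral_withDensity_eq_integral_toReal_smul (by fun_prop) (by simp)] at key
  simp only [ENNReal.toReal_ofReal (hY0 _), smul_eq_mul] at key
  simpa only [mul_comm, mul_left_comm, mul_assoc] using key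

theorem abs_covariance_le (hα : IsMixingBound P m₁ m₂ α) (h₁ : m₁ ≤ m₀) (h₂ : m₂ ≤ m₀)
    {a₁ a₂ b₁ b₂ : ℝ} {X Y : Ω → ℝ} (hX : Measurable[m₁] X) (hY : Measurable[m₂] Y)
    (hXa : ∀ ω, X ω ∈ Set.Icc a₁ a₂) (hYb : ∀ ω, Y ω ∈ Set.Icc b₁ b₂) :
    |cov[X, Y; P]| ≤ α * (a₂ - a₁) * (b₂ - b₁) := by
  obtain ⟨ω⟩ := P.nonempty_of_neZero
  have hXm : Measurable X := hX.mono h₁ le_rfl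
  have hYm : Measurable Y := hY.mono h₂ le_rfl
  have hXa' (ω) : X ω - a₁ ∈ Set.Icc 0 (a₂ - a₁) :=
    ⟨sub_nonneg.mpr (hXa ω).1, sub_le_sub_right (hXa ω).2 a₁⟩
  have hYb' (ω) : Y ω - b₁ ∈ Set.Icc 0 (b₂ - b₁) :=
    ⟨sub_nonneg.mpr (hYb ω).1, sub_le_sub_right (hYb ω).2 b₁⟩
  have key := hα.abs_integral_mul_sub_le h₁ h₂ ((hXa' ω).1.trans (hXa' ω).2)
    ((hYb' ω).1.trans (hYb' ω).2) (hX.sub_const a₁) (hY.sub_const b₁) hXa' hYb'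
  rw [← covariance_sub_const_left (integrable_of_measurable_of_mem_Icc hXm hXa) a₁,
    ← covariance_sub_const_right (integrable_of_measurable_of_mem_Icc hYm hYb) b₁,
    covariance_eq_sub (memLp_of_bounded (.of_forall hXa') (hXm.sub_const a₁).aestronglyMeasurable 2)
      (memLp_of_bounded (.of_forall hYb') (hYm.sub_const b₁).aestronglyMeasurable 2)]
  exact key

end IsMixingBound

end Covariance

section Mixing

variable {N : ℕ} {Ω E : Type*} [MeasurableSpace E] {Z : (Fin N → ℤ) → Ω → E}

theorem comap_le_fieldSigma {I : Set (Fin N → ℤ)} {s : Fin N → ℤ} (hs : s ∈ I) :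
    MeasurableSpace.comap (Z s) inferInstance ≤ fieldSigma Z I :=
  le_iSup₂_of_le s hs le_rfl

theorem fieldSigma_mono {I J : Set (Fin N → ℤ)} (h : I ⊆ J) : fieldSigma Z I ≤ fieldSigma Z J :=
  iSup₂_le fun _ hs => comap_le_fieldSigma (h hs)

variable [m₀ : MeasurableSpace Ω] {P : Measure Ω}

theorem fieldSigma_le (hZ : ∀ s, Measurable (Z s)) (I : Set (Fin N → ℤ)) : fieldSigma Z I ≤ m₀ :=
  iSup₂_le fun s _ => (hZ s).comap_le

theorem alphaMix_nonneg (k : ℕ) : 0 ≤ alphaMix P Z k := by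
  apply Real.sSup_nonneg
  rintro x ⟨I, J, -, A, B, -, -, rfl⟩
  exact abs_nonneg _

theorem abar_nonneg (k : ℕ) : 0 ≤ abar P Z k :=
  Finset.sum_nonneg fun u _ => mul_nonneg (by positivity) (alphaMix_nonneg u)

variable [IsProbabilityMeasure P]

theorem abs_measureReal_inter_sub_mul_le_one (A B : Set Ω) :
    |P.real (A ∩ B) - P.real A * P.real B| ≤ 1 :=
  abs_sub_le_of_nonneg_of_le measureReal_nonneg measureReal_le_one (by positivity)
    (mul_le_one₀ measureReal_le_one measureReal_nonneg measureReal_le_one)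

theorem alphaMix_le_one (k : ℕ) : alphaMix P Z k ≤ 1 := by
  apply Real.sSup_le _ zero_le_one
  rintro x ⟨I, J, -, A, B, -, -, rfl⟩
  exact abs_measureReal_inter_sub_mul_le_one A B

theorem isMixingBound_alphaMix {k : ℕ} {I J : Set (Fin N → ℤ)}
    (hIJ : ∀ s ∈ I, ∀ t ∈ J, k ≤ latDist s t) :
    IsMixingBound P (fieldSigma Z I) (fieldSigma Z J) (alphaMix P Z k) := by
  intro A B hA hB
  refine le_csSup ⟨1, ?_⟩ ⟨I, J, hIJ, A, B, hA, hB, rfl⟩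
  rintro x ⟨I, J, -, A, B, -, -, rfl⟩
  exact abs_measureReal_inter_sub_mul_le_one A B

/-- The index sets `I r`, `r ∈ T`, lie at pairwise `ℓ∞`-distance at least `k`. -/
def PairwiseSeparated {ι : Type*} {N : ℕ} (k : ℕ) (I : ι → Set (Fin N → ℤ)) (T : Set ι) : Prop :=
  T.Pairwise fun r r' => ∀ s ∈ I r, ∀ t ∈ I r', k ≤ latDist s t

theorem isMixingBound_alphaMix_biUnion {ι : Type*} [DecidableEq ι] {k : ℕ}
    {I : ι → Set (Fin N → ℤ)} {r : ι} {T : Finset ι} (hr : r ∉ T)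
    (hI : PairwiseSeparated k I ↑(insert r T)) :
    IsMixingBound P (fieldSigma Z (I r)) (fieldSigma Z (⋃ r' ∈ T, I r')) (alphaMix P Z k) := by
  refine isMixingBound_alphaMix fun s hs t ht => ?_
  obtain ⟨r', hr', ht⟩ := Set.mem_iUnion₂.mp ht
  exact hI (Finset.mem_insert_self r T) (Finset.mem_insert_of_mem hr')
    (by rintro rfl; exact hr hr') s hs t ht

variable {ι : Type*} {k : ℕ} {I : ι → Set (Fin N → ℤ)} {W : ι → Ω → ℝ} {M : ℝ}

theorem integral_prod_insert_le_of_separated [DecidableEq ι] (hZ : ∀ s, Measurable (Z s)) {r : ι}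
    {T : Finset ι} (hr : r ∉ T) (hI : PairwiseSeparated k I ↑(insert r T))
    (hW : ∀ r, Measurable[fieldSigma Z (I r)] (W r)) (hM : 0 ≤ M)
    (hWM : ∀ r ω, W r ω ∈ Set.Icc 0 M) :
    ∫ ω, ∏ r ∈ insert r T, W r ω ∂P ≤
      (∫ ω, W r ω ∂P) * ∫ ω, ∏ r ∈ T, W r ω ∂P + alphaMix P Z k * M ^ (insert r T).card := by
  have key := (isMixingBound_alphaMix_biUnion (P := P) (Z := Z) hr hI).abs_integral_mul_sub_le
    (fieldSigma_le hZ _) (fieldSigma_le hZ _) hM (pow_nonneg hM T.card) (hW r)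
    (Y := fun ω => ∏ r' ∈ T, W r' ω)
    (Finset.measurable_fun_prod _ fun r' hr' => (hW r').mono
      (fieldSigma_mono (Set.subset_biUnion_of_mem (u := I) hr')) le_rfl)
    (hWM r) fun ω => ⟨Finset.prod_nonneg fun r' _ => (hWM r' ω).1,
      (Finset.prod_le_prod (fun r' _ => (hWM r' ω).1) fun r' _ => (hWM r' ω).2).trans_eq
        (Finset.prod_const M)⟩
  simp only [Finset.prod_insert hr, Finset.card_insert_of_notMem hr, pow_succ']
  linarith [(abs_le.mp key).2]

theorem integral_prod_le_of_separated (hZ : ∀ s, Measurable (Z s)) (T : Finset ι)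
    (hI : PairwiseSeparated k I T) (hW : ∀ r, Measurable[fieldSigma Z (I r)] (W r)) (hM : 1 ≤ M)
    (hWM : ∀ r ω, W r ω ∈ Set.Icc 0 M) (hW1 : ∀ r, 1 ≤ ∫ ω, W r ω ∂P) :
    ∫ ω, ∏ r ∈ T, W r ω ∂P ≤
      (∏ r ∈ T, ∫ ω, W r ω ∂P) * (1 + T.card * (alphaMix P Z k * M ^ T.card)) := by
  classical
  induction T using Finset.induction_on with
  | empty => simp
  | insert r T hr ih =>
    have hα : 0 ≤ alphaMix P Z k := alphaMix_nonneg k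
    have hE : 0 ≤ ∫ ω, W r ω ∂P := zero_le_one.trans (hW1 r)
    have hprod : 1 ≤ ∏ r ∈ insert r T, ∫ ω, W r ω ∂P := Finset.one_le_prod fun r _ => hW1 r
    have hprod' : 0 ≤ ∏ r ∈ T, ∫ ω, W r ω ∂P :=
      zero_le_one.trans (Finset.one_le_prod fun r _ => hW1 r)
    set D := alphaMix P Z k * M ^ (insert r T).card with hD
    have hD0 : 0 ≤ D := by positivity
    have hDT : alphaMix P Z k * M ^ T.card ≤ D := by
      have := Finset.card_le_card (Finset.subset_insert r T)
      rw [hD]; gcongr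
    calc ∫ ω, ∏ r ∈ insert r T, W r ω ∂P
        ≤ (∫ ω, W r ω ∂P) * ∫ ω, ∏ r ∈ T, W r ω ∂P + D :=
          integral_prod_insert_le_of_separated hZ hr hI hW (zero_le_one.trans hM) hWM
      _ ≤ (∫ ω, W r ω ∂P) * ((∏ r ∈ T, ∫ ω, W r ω ∂P) * (1 + T.card * D)) + D := by
          gcongr
          refine (ih (hI.mono (by simp))).trans ?_
          gcongr
      _ = (∏ r ∈ insert r T, ∫ ω, W r ω ∂P) * (1 + T.card * D) + 1 * D := by
          rw [Finset.prod_insert hr]; ring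
      _ ≤ (∏ r ∈ insert r T, ∫ ω, W r ω ∂P) * (1 + T.card * D) +
            (∏ r ∈ insert r T, ∫ ω, W r ω ∂P) * D := by gcongr
      _ = (∏ r ∈ insert r T, ∫ ω, W r ω ∂P) * (1 + (insert r T).card * D) := by
          rw [Finset.card_insert_of_notMem hr]; push_cast; ring

end Mixing

section Lattice

variable {N : ℕ} {s t : Fin N → ℤ} {k : ℕ}

theorem latDist_le_iff : latDist s t ≤ k ↔ ∀ i, (s i - t i).natAbs ≤ k := by
  simp [latDist, Finset.sup_le_iff]

theorem natAbs_sub_le_latDist (s t : Fin N → ℤ) (i : Fin N) :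
    (s i - t i).natAbs ≤ latDist s t :=
  latDist_le_iff.mp le_rfl i

theorem latDist_eq_zero : latDist s t = 0 ↔ s = t := by
  rw [← Nat.le_zero, latDist_le_iff, funext_iff]
  exact forall_congr' fun i => by omega

/-- The closed `ℓ∞`-ball of radius `k` around `s`, as a finite set of lattice points. -/
def latBall (s : Fin N → ℤ) (k : ℕ) : Finset (Fin N → ℤ) :=
  Finset.Icc (fun i => s i - k) fun i => s i + k

theorem mem_latBall : t ∈ latBall s k ↔ latDist s t ≤ k := by
  rw [latBall, latDist_le_iff, Finset.mem_Icc, Pi.le_def, Pi.le_def, ← forall_and]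
  exact forall_congr' fun i => by omega

theorem latBall_mono (s : Fin N → ℤ) : Monotone (latBall s) := fun _ _ hkl _ ht =>
  mem_latBall.mpr ((mem_latBall.mp ht).trans hkl)

theorem card_latBall (s : Fin N → ℤ) (k : ℕ) : (latBall s k).card = (2 * k + 1) ^ N := by
  have hside (i : Fin N) : (s i + k + 1 - (s i - k)).toNat = 2 * k + 1 := by omega
  simp [latBall, Pi.card_Icc, Int.card_Icc, hside]

/-- The constant `2N3^{N-1}`, for which `sphereConst N * u ^ (N - 1)` bounds the number of points on
an `ℓ∞`-sphere of radius `u ≥ 1` in `ℤ^N`. It is the constant `γ` of the inequality. -/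
def sphereConst (N : ℕ) : ℝ := 2 * N * 3 ^ (N - 1)

theorem sphereConst_nonneg (N : ℕ) : 0 ≤ sphereConst N := by
  unfold sphereConst; positivity

theorem add_one_pow_sub_sub_one_pow_le (N : ℕ) {u : ℝ} (hu : 1 ≤ u) :
    (2 * u + 1) ^ N - (2 * u - 1) ^ N ≤ sphereConst N * u ^ (N - 1) := by
  have hmax : max |2 * u + 1| |2 * u - 1| ≤ 3 * u := by
    rw [abs_of_nonneg (by linarith), abs_of_nonneg (by linarith)]
    exact max_le (by linarith) (by linarith)
  calc (2 * u + 1) ^ N - (2 * u - 1) ^ N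
      ≤ |(2 * u + 1) - (2 * u - 1)| * N * max |2 * u + 1| |2 * u - 1| ^ (N - 1) :=
        (le_abs_self _).trans (abs_pow_sub_pow_le _ _ N)
    _ ≤ |(2 * u + 1) - (2 * u - 1)| * N * (3 * u) ^ (N - 1) := by gcongr
    _ = sphereConst N * u ^ (N - 1) := by
        rw [show (2 * u + 1) - (2 * u - 1) = 2 by ring, abs_two, mul_pow, sphereConst]; ring

theorem card_filter_latDist_eq_le (s : Fin N → ℤ) (G : Finset (Fin N → ℤ)) {u : ℕ} (hu : 1 ≤ u) :
    ((G.filter fun t => latDist s t = u).card : ℝ) ≤ sphereConst N * (u : ℝ) ^ (N - 1) := by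
  have hsub : latBall s (u - 1) ⊆ latBall s u := latBall_mono s (Nat.sub_le u 1)
  have hsphere : (G.filter fun t => latDist s t = u) ⊆ latBall s u \ latBall s (u - 1) := by
    intro t ht
    rw [Finset.mem_filter] at ht
    rw [Finset.mem_sdiff, mem_latBall, mem_latBall]
    omega
  calc ((G.filter fun t => latDist s t = u).card : ℝ)
      ≤ ((latBall s u \ latBall s (u - 1)).card : ℝ) := by
        exact_mod_cast Finset.card_le_card hsphere
    _ = (2 * (u : ℝ) + 1) ^ N - (2 * (u : ℝ) - 1) ^ N := by
        rw [Finset.cast_card_sdiff hsub, card_latBall, card_latBall]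
        push_cast [Nat.cast_sub hu]
        ring
    _ ≤ sphereConst N * (u : ℝ) ^ (N - 1) :=
        add_one_pow_sub_sub_one_pow_le N (by exact_mod_cast hu)

theorem sum_comp_latDist_le {G : Finset (Fin N → ℤ)} (hs : s ∉ G) (hG : ∀ t ∈ G, latDist s t ≤ k)
    {f : ℕ → ℝ} (hf : ∀ u, 0 ≤ f u) :
    ∑ t ∈ G, f (latDist s t) ≤
      sphereConst N * ∑ u ∈ Finset.Icc 1 k, (u : ℝ) ^ (N - 1) * f u := by
  have hmaps : ∀ t ∈ G, latDist s t ∈ Finset.Icc 1 k := fun t ht =>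
    Finset.mem_Icc.mpr ⟨Nat.one_le_iff_ne_zero.mpr fun h => hs (latDist_eq_zero.mp h ▸ ht), hG t ht⟩
  rw [← Finset.sum_fiberwise_of_maps_to' hmaps, Finset.mul_sum]
  refine Finset.sum_le_sum fun u hu => ?_
  rw [Finset.sum_const, nsmul_eq_mul, ← mul_assoc]
  exact mul_le_mul_of_nonneg_right (card_filter_latDist_eq_le s G (Finset.mem_Icc.mp hu).1) (hf u)

end Lattice

section Mgf

variable {Ω : Type*} {m₀ : MeasurableSpace Ω} {P : Measure Ω} {X : Ω → ℝ} {θ : ℝ}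

theorem one_le_mgf_of_integral_eq_zero [IsProbabilityMeasure P] (hX : Integrable X P)
    (h0 : ∫ ω, X ω ∂P = 0) (hexp : Integrable (fun ω => Real.exp (θ * X ω)) P) : 1 ≤ mgf X P θ := by
  have hlin : ∫ ω, (θ * X ω + 1) ∂P = 1 := by
    rw [integral_add (hX.const_mul θ) (integrable_const 1), integral_const_mul, h0]
    simp
  rw [← hlin]
  exact integral_mono ((hX.const_mul θ).add (integrable_const 1)) hexp
    fun ω => Real.add_one_le_exp _

theorem mgf_le_exp_of_abs_le [IsProbabilityMeasure P] {c : ℝ} (h : ∀ ω, |θ * X ω| ≤ c) :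
    mgf X P θ ≤ Real.exp c := by
  refine (integral_mono_of_nonneg (.of_forall fun ω => (Real.exp_pos _).le)
    (integrable_const (Real.exp c))
    (.of_forall fun ω => Real.exp_le_exp.mpr ((le_abs_self _).trans (h ω)))).trans_eq ?_
  simp

theorem integrable_exp_mul_of_abs_le [IsFiniteMeasure P] (hX : AEMeasurable X P) {b : ℝ}
    (hb : ∀ ω, |X ω| ≤ b) :
    Integrable (fun ω => Real.exp (θ * X ω)) P :=
  integrable_exp_mul_of_mem_Icc hX (.of_forall fun ω => abs_le.mp (hb ω))

-- Integrate `exp y ≤ 1 + y + y²`, valid for `|y| ≤ 1`.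
theorem mgf_le_exp_sq_mul_variance [IsProbabilityMeasure P] (hX : MemLp X 2 P)
    (h0 : ∫ ω, X ω ∂P = 0) (hθ : ∀ ω, |θ * X ω| ≤ 1) :
    mgf X P θ ≤ Real.exp (θ ^ 2 * Var[X; P]) := by
  have hint : Integrable (fun ω => θ * X ω) P := (hX.integrable one_le_two).const_mul θ
  have hlin : Integrable (fun ω => θ * X ω + 1) P := hint.add (integrable_const 1)
  have hsq : Integrable (fun ω => θ ^ 2 * X ω ^ 2) P := hX.integrable_sq.const_mul _
  have hpoint (ω : Ω) : Real.exp (θ * X ω) ≤ θ ^ 2 * X ω ^ 2 + (θ * X ω + 1) := by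
    linarith [(abs_le.mp (Real.abs_exp_sub_one_sub_id_le (hθ ω))).2, mul_pow θ (X ω) 2]
  calc mgf X P θ ≤ ∫ ω, (θ ^ 2 * X ω ^ 2 + (θ * X ω + 1)) ∂P :=
        integral_mono_of_nonneg (.of_forall fun ω => (Real.exp_pos _).le)
          (hsq.add hlin) (.of_forall hpoint)
    _ = θ ^ 2 * Var[X; P] + 1 := by
        rw [integral_add hsq hlin, integral_add hint (integrable_const 1), integral_const_mul,
          integral_const_mul, h0, variance_of_integral_eq_zero hX.aemeasurable h0]
        simp
    _ ≤ Real.exp (θ ^ 2 * Var[X; P]) := Real.add_one_le_exp _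

-- Jensen: the sum is the average of the variables `card ι • U i`.
theorem mgf_sum_le_of_mgf_le {ι : Type*} [Fintype ι] [Nonempty ι] {U : ι → Ω → ℝ} {K : ℝ}
    (hint : ∀ i, Integrable (fun ω => Real.exp (Fintype.card ι * θ * U i ω)) P)
    (hK : ∀ i, mgf (U i) P (Fintype.card ι * θ) ≤ K) :
    mgf (fun ω => ∑ i, U i ω) P θ ≤ K := by
  set w : ℝ := (Fintype.card ι : ℝ)⁻¹ with hw
  have hw0 : 0 ≤ w := by positivity
  have hcard : (Fintype.card ι : ℝ) ≠ 0 := Nat.cast_ne_zero.mpr Fintype.card_ne_zero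
  have hw1 : ∑ _i : ι, w = 1 := by simp [hw, hcard]
  have hjensen (ω : Ω) : Real.exp (θ * ∑ i, U i ω) ≤
      ∑ i, w * Real.exp (Fintype.card ι * θ * U i ω) := by
    refine le_of_eq_of_le ?_ (convexOn_exp.map_sum_le (t := Finset.univ) (w := fun _ : ι => w)
      (p := fun i => Fintype.card ι * θ * U i ω) (fun _ _ => hw0) hw1 fun _ _ => Set.mem_univ _)
    simp only [smul_eq_mul, Finset.mul_sum]
    congr 1
    exact Finset.sum_congr rfl fun i _ => by rw [hw]; field_simp
  calc mgf (fun ω => ∑ i, U i ω) P θ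
      ≤ ∫ ω, ∑ i, w * Real.exp (Fintype.card ι * θ * U i ω) ∂P :=
        integral_mono_of_nonneg (.of_forall fun ω => (Real.exp_pos _).le)
          (integrable_finsetSum _ fun i _ => (hint i).const_mul w) (.of_forall hjensen)
    _ = ∑ i, w * mgf (U i) P (Fintype.card ι * θ) := by
        rw [integral_finsetSum _ fun i _ => (hint i).const_mul w]
        simp only [integral_const_mul, mgf]
    _ ≤ ∑ _i : ι, w * K := Finset.sum_le_sum fun i _ => mul_le_mul_of_nonneg_left (hK i) hw0
    _ = K := by rw [← Finset.sum_mul, hw1, one_mul]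

theorem measureReal_le_abs_le_two_mul_exp_mul [IsFiniteMeasure P] {η K : ℝ} (hθ : 0 ≤ θ)
    (hpos : Integrable (fun ω => Real.exp (θ * X ω)) P)
    (hneg : Integrable (fun ω => Real.exp (-θ * X ω)) P)
    (hKpos : mgf X P θ ≤ K) (hKneg : mgf X P (-θ) ≤ K) :
    P.real {ω | η ≤ |X ω|} ≤ 2 * (Real.exp (-θ * η) * K) := by
  have hunion : {ω | η ≤ |X ω|} = {ω | η ≤ X ω} ∪ {ω | X ω ≤ -η} := by
    ext ω
    simp only [Set.mem_union, Set.mem_ofPred_eq, le_abs, le_neg]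
  have upper : P.real {ω | η ≤ X ω} ≤ Real.exp (-θ * η) * K :=
    (measure_ge_le_exp_mul_mgf η hθ hpos).trans (by gcongr)
  have lower : P.real {ω | X ω ≤ -η} ≤ Real.exp (-θ * η) * K := by
    refine (measure_le_le_exp_mul_mgf (-η) (neg_nonpos.mpr hθ) hneg).trans ?_
    rw [neg_neg, mul_neg, ← neg_mul]
    gcongr
  rw [hunion]
  linarith [measureReal_union_le (μ := P) {ω | η ≤ X ω} {ω | X ω ≤ -η}]

end Mgf

/-- `Y` is a field of centred random variables bounded by `b`, of variance at most `σ2`, with each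
`Y s` a measurable function of the single variable `Z s`, so that `Y` inherits the mixing
coefficients of `Z`. -/
structure BoundedCentredField {ι Ω E : Type*} [MeasurableSpace Ω] [MeasurableSpace E]
    (P : Measure Ω) (Z : ι → Ω → E) (Y : ι → Ω → ℝ) (b σ2 : ℝ) : Prop where
  measurable_base : ∀ s, Measurable (Z s)
  measurable_comap : ∀ s, Measurable[MeasurableSpace.comap (Z s) inferInstance] (Y s)
  abs_le_bound : ∀ s ω, |Y s ω| ≤ b
  integral_eq_zero : ∀ s, ∫ ω, Y s ω ∂P = 0
  variance_le : ∀ s, Var[Y s; P] ≤ σ2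

/-- Bound per lattice point for the variance of a block sum of diameter at most `p` of a
`BoundedCentredField`. -/
def varianceRate {N : ℕ} {Ω E : Type*} [MeasurableSpace Ω] [MeasurableSpace E] (P : Measure Ω)
    (Z : (Fin N → ℤ) → Ω → E) (b σ2 : ℝ) (p : ℕ) : ℝ :=
  σ2 + 4 * b ^ 2 * (sphereConst N * abar P Z p)

namespace BoundedCentredField

section Sums

variable {ι Ω E : Type*} [MeasurableSpace Ω] [MeasurableSpace E] {P : Measure Ω}
  {Z : ι → Ω → E} {Y : ι → Ω → ℝ} {b σ2 : ℝ}

theorem measurable (h : BoundedCentredField P Z Y b σ2) (s : ι) : Measurable (Y s) :=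
  (h.measurable_comap s).mono (h.measurable_base s).comap_le le_rfl

theorem measurable_sum (h : BoundedCentredField P Z Y b σ2) (G : Finset ι) :
    Measurable fun ω => ∑ s ∈ G, Y s ω :=
  Finset.measurable_fun_sum _ fun s _ => h.measurable s

theorem abs_sum_le (h : BoundedCentredField P Z Y b σ2) (G : Finset ι) (ω : Ω) :
    |∑ s ∈ G, Y s ω| ≤ G.card * b := by
  rw [← nsmul_eq_mul]
  exact (Finset.abs_sum_le_sum_abs _ _).trans
    (Finset.sum_le_card_nsmul _ _ _ fun s _ => h.abs_le_bound s ω)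

variable [IsProbabilityMeasure P]

theorem bound_nonneg [Nonempty ι] (h : BoundedCentredField P Z Y b σ2) : 0 ≤ b := by
  obtain ⟨ω⟩ := P.nonempty_of_neZero
  exact (abs_nonneg _).trans (h.abs_le_bound (Classical.arbitrary ι) ω)

theorem memLp (h : BoundedCentredField P Z Y b σ2) (s : ι) : MemLp (Y s) 2 P :=
  .of_bound (h.measurable s).aestronglyMeasurable b (.of_forall (h.abs_le_bound s))

theorem memLp_sum (h : BoundedCentredField P Z Y b σ2) (G : Finset ι) :
    MemLp (fun ω => ∑ s ∈ G, Y s ω) 2 P :=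
  memLp_finsetSum _ fun s _ => h.memLp s

theorem integral_sum_eq_zero (h : BoundedCentredField P Z Y b σ2) (G : Finset ι) :
    ∫ ω, ∑ s ∈ G, Y s ω ∂P = 0 := by
  rw [integral_finsetSum _ fun s _ => (h.memLp s).integrable one_le_two]
  exact Finset.sum_eq_zero fun s _ => h.integral_eq_zero s

theorem integrable_exp_mul_sum (h : BoundedCentredField P Z Y b σ2) (G : Finset ι) (θ : ℝ) :
    Integrable (fun ω => Real.exp (θ * ∑ s ∈ G, Y s ω)) P :=
  integrable_exp_mul_of_abs_le (h.measurable_sum G).aemeasurable (h.abs_sum_le G)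

end Sums

section Mixing

variable {N : ℕ} {Ω E : Type*} [MeasurableSpace Ω] [MeasurableSpace E] {P : Measure Ω}
  {Z : (Fin N → ℤ) → Ω → E} {Y : (Fin N → ℤ) → Ω → ℝ} {b σ2 : ℝ}

theorem measurable_fieldSigma_sum (h : BoundedCentredField P Z Y b σ2) (G : Finset (Fin N → ℤ)) :
    Measurable[fieldSigma Z ↑G] fun ω => ∑ s ∈ G, Y s ω :=
  Finset.measurable_fun_sum _ fun s hs =>
    (h.measurable_comap s).mono (comap_le_fieldSigma hs) le_rfl

theorem varianceRate_nonneg (h : BoundedCentredField P Z Y b σ2) (p : ℕ) :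
    0 ≤ varianceRate P Z b σ2 p := by
  have hσ2 : 0 ≤ σ2 := (variance_nonneg (Y 0) P).trans (h.variance_le 0)
  have hC := sphereConst_nonneg N
  have habar : 0 ≤ abar P Z p := abar_nonneg p
  unfold varianceRate
  positivity

variable [IsProbabilityMeasure P]

theorem abs_covariance_le (h : BoundedCentredField P Z Y b σ2) (s t : Fin N → ℤ) :
    |cov[Y s, Y t; P]| ≤ 4 * b ^ 2 * alphaMix P Z (latDist s t) := by
  have hsep : ∀ s' ∈ ({s} : Set (Fin N → ℤ)), ∀ t' ∈ ({t} : Set (Fin N → ℤ)),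
      latDist s t ≤ latDist s' t' := by
    rintro _ rfl _ rfl
    rfl
  have key := (isMixingBound_alphaMix (P := P) (Z := Z) hsep).abs_covariance_le
    (fieldSigma_le h.measurable_base _) (fieldSigma_le h.measurable_base _)
    ((h.measurable_comap s).mono (comap_le_fieldSigma rfl) le_rfl)
    ((h.measurable_comap t).mono (comap_le_fieldSigma rfl) le_rfl)
    (fun ω => abs_le.mp (h.abs_le_bound s ω)) (fun ω => abs_le.mp (h.abs_le_bound t ω))
  linarith

theorem variance_sum_le (h : BoundedCentredField P Z Y b σ2) {G : Finset (Fin N → ℤ)} {p : ℕ}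
    (hG : ∀ s ∈ G, ∀ t ∈ G, latDist s t ≤ p) :
    Var[fun ω => ∑ s ∈ G, Y s ω; P] ≤ G.card * varianceRate P Z b σ2 p := by
  classical
  rw [variance_fun_sum' fun s _ => h.memLp s, ← nsmul_eq_mul]
  refine Finset.sum_le_card_nsmul _ _ _ fun s hs => ?_
  rw [← Finset.add_sum_erase _ _ hs, covariance_self (h.measurable s).aemeasurable]
  refine add_le_add (h.variance_le s) ?_
  calc ∑ t ∈ G.erase s, cov[Y s, Y t; P]
      ≤ ∑ t ∈ G.erase s, 4 * b ^ 2 * alphaMix P Z (latDist s t) :=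
        Finset.sum_le_sum fun t _ => (le_abs_self _).trans (h.abs_covariance_le s t)
    _ ≤ 4 * b ^ 2 * (sphereConst N * abar P Z p) := by
        rw [← Finset.mul_sum]
        exact mul_le_mul_of_nonneg_left (sum_comp_latDist_le (Finset.notMem_erase _ _)
          (fun t ht => hG s hs t (Finset.mem_of_mem_erase ht)) alphaMix_nonneg) (by positivity)

end Mixing

end BoundedCentredField

-- If `α ^ x ≤ exp (-c)` the factor `exp c ^ R` is absorbed by `R` of the `R + 1` copies of `α ^ x`
-- contained in `α`; otherwise `α ^ x > exp (-c) ≥ 1 - c ≥ c`.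
theorem mul_exp_pow_le_rpow_or_le_rpow {α c x : ℝ} {R : ℕ} (hα0 : 0 ≤ α) (hα1 : α ≤ 1)
    (hc : c ≤ 1 / 2) (hx : x * (R + 1) ≤ 1) :
    α * Real.exp c ^ R ≤ α ^ x ∨ c ≤ α ^ x := by
  have ha0 : 0 ≤ α ^ x := Real.rpow_nonneg hα0 x
  rcases le_total (α ^ x) (Real.exp (-c)) with hac | hac
  · left
    have hαx : α ≤ (α ^ x) ^ (R + 1) := by
      rcases hα0.eq_or_lt with rfl | h
      · positivity
      · rw [← Real.rpow_natCast, ← Real.rpow_mul hα0]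
        exact (Real.rpow_one α).symm.trans_le
          (Real.rpow_le_rpow_of_exponent_ge h hα1 (by exact_mod_cast hx))
    calc α * Real.exp c ^ R ≤ (α ^ x) ^ (R + 1) * Real.exp c ^ R := by gcongr
      _ = α ^ x * (α ^ x * Real.exp c) ^ R := by ring
      _ ≤ α ^ x * (Real.exp (-c) * Real.exp c) ^ R := by gcongr
      _ = α ^ x := by rw [← Real.exp_add]; simp
  · right
    linarith [Real.add_one_le_exp (-c)]

section Separated

variable {ι : Type*} {N : ℕ} {Ω E : Type*} [MeasurableSpace Ω] [MeasurableSpace E] {P : Measure Ω}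
  [IsProbabilityMeasure P] {Z : (Fin N → ℤ) → Ω → E}

theorem mgf_sum_le_of_separated {k : ℕ} {I : ι → Set (Fin N → ℤ)} {S : ι → Ω → ℝ} {T : Finset ι}
    {θ c x : ℝ} (hZ : ∀ s, Measurable (Z s)) (hI : PairwiseSeparated k I T)
    (hS : ∀ r, Measurable[fieldSigma Z (I r)] (S r)) (hc0 : 0 ≤ c) (hc : c ≤ 1 / 2)
    (hSc : ∀ r ω, |θ * S r ω| ≤ c) (hS1 : ∀ r, 1 ≤ mgf (S r) P θ) (hx : x * (T.card + 1) ≤ 1) :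
    mgf (fun ω => ∑ r ∈ T, S r ω) P θ ≤
      Real.exp (T.card * alphaMix P Z k ^ x) * ∏ r ∈ T, mgf (S r) P θ := by
  have hprod : 1 ≤ ∏ r ∈ T, mgf (S r) P θ := Finset.one_le_prod fun r _ => hS1 r
  rcases mul_exp_pow_le_rpow_or_le_rpow (alphaMix_nonneg k) (alphaMix_le_one (P := P) (Z := Z) k)
    hc hx with hα | hα
  · have hexp (ω : Ω) : Real.exp (θ * ∑ r ∈ T, S r ω) = ∏ r ∈ T, Real.exp (θ * S r ω) := by
      rw [Finset.mul_sum, Real.exp_sum]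
    calc mgf (fun ω => ∑ r ∈ T, S r ω) P θ = ∫ ω, ∏ r ∈ T, Real.exp (θ * S r ω) ∂P := by
          simp only [mgf, hexp]
      _ ≤ (∏ r ∈ T, mgf (S r) P θ) * (1 + T.card * (alphaMix P Z k * Real.exp c ^ T.card)) :=
          integral_prod_le_of_separated hZ T hI
            (fun r => Real.measurable_exp.comp ((hS r).const_mul θ)) (Real.one_le_exp hc0)
            (fun r ω => ⟨(Real.exp_pos _).le,
              Real.exp_le_exp.mpr ((le_abs_self _).trans (hSc r ω))⟩) hS1
      _ ≤ (∏ r ∈ T, mgf (S r) P θ) * (T.card * alphaMix P Z k ^ x + 1) := by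
          rw [add_comm (1 : ℝ)]; gcongr
      _ ≤ (∏ r ∈ T, mgf (S r) P θ) * Real.exp (T.card * alphaMix P Z k ^ x) := by
          gcongr; exact Real.add_one_le_exp _
      _ = _ := mul_comm _ _
  · have hsum (ω : Ω) : |θ * ∑ r ∈ T, S r ω| ≤ T.card * c := by
      rw [Finset.mul_sum, ← nsmul_eq_mul]
      exact (Finset.abs_sum_le_sum_abs _ _).trans
        (Finset.sum_le_card_nsmul _ _ _ fun r _ => hSc r ω)
    calc mgf (fun ω => ∑ r ∈ T, S r ω) P θ ≤ Real.exp (T.card * c) := mgf_le_exp_of_abs_le hsum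
      _ ≤ Real.exp (T.card * alphaMix P Z k ^ x) := by gcongr
      _ ≤ _ := le_mul_of_one_le_right (Real.exp_pos _).le hprod

namespace BoundedCentredField

variable {Y : (Fin N → ℤ) → Ω → ℝ} {b σ2 : ℝ}

theorem mgf_sum_mem_Icc (h : BoundedCentredField P Z Y b σ2) {G : Finset (Fin N → ℤ)} {p : ℕ}
    (hG : ∀ s ∈ G, ∀ t ∈ G, latDist s t ≤ p) {θ : ℝ} (hθ : ∀ ω, |θ * ∑ s ∈ G, Y s ω| ≤ 1) :
    mgf (fun ω => ∑ s ∈ G, Y s ω) P θ ∈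
      Set.Icc 1 (Real.exp (θ ^ 2 * (G.card * varianceRate P Z b σ2 p))) := by
  refine ⟨one_le_mgf_of_integral_eq_zero ((h.memLp_sum G).integrable one_le_two)
    (h.integral_sum_eq_zero G) (h.integrable_exp_mul_sum G θ),
    (mgf_le_exp_sq_mul_variance (h.memLp_sum G) (h.integral_sum_eq_zero G) hθ).trans ?_⟩
  gcongr
  exact h.variance_sum_le hG

theorem mgf_sum_blocks_le (h : BoundedCentredField P Z Y b σ2) {T : Finset ι}
    {G : ι → Finset (Fin N → ℤ)} {p q m : ℕ} {θ x : ℝ}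
    (hsep : PairwiseSeparated q (fun r => (G r : Set (Fin N → ℤ))) T)
    (hdiam : ∀ r, ∀ s ∈ G r, ∀ t ∈ G r, latDist s t ≤ p) (hcard : ∀ r, (G r).card ≤ m)
    (hθ : 0 ≤ θ) (hc : θ * (m * b) ≤ 1 / 2) (hx : x * (T.card + 1) ≤ 1) :
    mgf (fun ω => ∑ r ∈ T, ∑ s ∈ G r, Y s ω) P θ ≤
      Real.exp (T.card * alphaMix P Z q ^ x) *
        Real.exp (θ ^ 2 * ((∑ r ∈ T, (G r).card : ℕ) * varianceRate P Z b σ2 p)) := by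
  have hb : 0 ≤ b := h.bound_nonneg
  have hsmall (r : ι) (ω : Ω) : |θ * ∑ s ∈ G r, Y s ω| ≤ θ * (m * b) := by
    rw [abs_mul, abs_of_nonneg hθ]
    have := hcard r
    exact mul_le_mul_of_nonneg_left ((h.abs_sum_le (G r) ω).trans (by gcongr)) hθ
  have hmgf (r : ι) := h.mgf_sum_mem_Icc (hdiam r) fun ω => (hsmall r ω).trans (by linarith)
  refine (mgf_sum_le_of_separated h.measurable_base hsep (fun r => h.measurable_fieldSigma_sum _)
    (by positivity) hc hsmall (fun r => (hmgf r).1) hx).trans ?_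
  rw [Nat.cast_sum, Finset.sum_mul, Finset.mul_sum, Real.exp_sum]
  gcongr with r
  · exact fun r _ => mgf_nonneg
  · exact (hmgf r).2

end BoundedCentredField

end Separated

section Blocks

theorem le_natAbs_sub_of_ediv_ne {x y : ℤ} {p q : ℕ} (hp : 0 < p) (hqp : q ≤ p)
    (h : x % (p + q : ℤ) < p ↔ y % (p + q : ℤ) < p) (hne : x / (p + q : ℤ) ≠ y / (p + q : ℤ)) :
    q ≤ (x - y).natAbs := by
  have hd : (0 : ℤ) < p + q := by omega
  have hx := Int.mul_ediv_add_emod x (p + q)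
  have hy := Int.mul_ediv_add_emod y (p + q)
  have hx0 := Int.emod_nonneg x hd.ne'
  have hy0 := Int.emod_nonneg y hd.ne'
  have hxd := Int.emod_lt_of_pos x hd
  have hyd := Int.emod_lt_of_pos y hd
  rcases lt_or_gt_of_ne hne with hlt | hlt <;>
  · have := mul_le_mul_of_nonneg_left (Int.add_one_le_iff.mpr hlt) hd.le
    rw [mul_add] at this
    omega

theorem natAbs_sub_lt_of_ediv_eq {x y : ℤ} {p q : ℕ} (hp : 0 < p) (hqp : q ≤ p)
    (h : x % (p + q : ℤ) < p ↔ y % (p + q : ℤ) < p) (heq : x / (p + q : ℤ) = y / (p + q : ℤ)) :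
    (x - y).natAbs < p := by
  have hd : (0 : ℤ) < p + q := by omega
  have hx := Int.mul_ediv_add_emod x (p + q)
  have hy := Int.mul_ediv_add_emod y (p + q)
  have hx0 := Int.emod_nonneg x hd.ne'
  have hy0 := Int.emod_nonneg y hd.ne'
  have hxd := Int.emod_lt_of_pos x hd
  have hyd := Int.emod_lt_of_pos y hd
  rw [heq] at hx
  omega

variable {N : ℕ}

-- Reduction modulo `p` is injective on a set whose `i`-th side is shorter than `p i`.
theorem card_le_prod_of_natAbs_sub_lt {G : Finset (Fin N → ℤ)} {p : Fin N → ℕ}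
    (hp : ∀ i, 0 < p i) (h : ∀ s ∈ G, ∀ t ∈ G, ∀ i, (s i - t i).natAbs < p i) :
    G.card ≤ ∏ i, p i := by
  have hp' (i : Fin N) : (0 : ℤ) < p i := by exact_mod_cast hp i
  have hcard := Finset.card_le_card_of_injOn (s := G)
    (t := Fintype.piFinset fun i => Finset.Ico (0 : ℤ) (p i)) (fun s i => s i % (p i : ℤ))
    (fun s _ => Fintype.mem_piFinset.mpr fun i =>
      Finset.mem_Ico.mpr ⟨Int.emod_nonneg _ (hp' i).ne', Int.emod_lt_of_pos _ (hp' i)⟩)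
    (fun s hs t ht hst => funext fun i => sub_eq_zero.mp <|
      Int.eq_zero_of_abs_lt_dvd (Int.ModEq.dvd (congrFun hst i).symm) <| by
        rw [Int.abs_eq_natAbs]; exact_mod_cast h s hs t ht i)
  simpa using hcard

/-- The type of a lattice point: `ℤ^N` is tiled by boxes of sides `p i + q i`, every side consisting
of a part of length `p i` followed by one of length `q i`, and the type of `s` records for each
coordinate whether `s` lies in the first part. The windows start at `1`, hence the shift. -/
def blockType (p q : Fin N → ℕ) (s : Fin N → ℤ) : Fin N → Bool :=
  fun i => decide ((s i - 1) % (p i + q i : ℤ) < p i)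

/-- The index of the box of sides `p i + q i` containing a lattice point. -/
def blockIdx (p q : Fin N → ℕ) (s : Fin N → ℤ) : Fin N → ℤ :=
  fun i => (s i - 1) / (p i + q i : ℤ)

/-- The points of the observation window of type `δ` in the box with index `r`. -/
def block (n p q : Fin N → ℕ) (δ : Fin N → Bool) (r : Fin N → ℤ) : Finset (Fin N → ℤ) :=
  {s ∈ obsIdx n | blockType p q s = δ ∧ blockIdx p q s = r}

/-- A finite set of indices containing those of all boxes that meet the observation window. -/
def blockRange (n p q : Fin N → ℕ) : Finset (Fin N → ℤ) :=
  Fintype.piFinset fun i => Finset.Icc 0 ((n i : ℤ) / (p i + q i))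

theorem mem_block {n p q : Fin N → ℕ} {δ : Fin N → Bool} {r s : Fin N → ℤ} :
    s ∈ block n p q δ r ↔ s ∈ obsIdx n ∧ blockType p q s = δ ∧ blockIdx p q s = r :=
  Finset.mem_filter

theorem blockIdx_mem_blockRange {n : Fin N → ℕ} (p q : Fin N → ℕ) {s : Fin N → ℤ}
    (hs : s ∈ obsIdx n) : blockIdx p q s ∈ blockRange n p q := by
  rw [obsIdx, Finset.mem_Icc] at hs
  refine Fintype.mem_piFinset.mpr fun i => Finset.mem_Icc.mpr ?_
  have h1 : 1 ≤ s i := hs.1 i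
  have h2 : s i ≤ n i := hs.2 i
  have hd : (0 : ℤ) ≤ p i + q i := by omega
  refine ⟨Int.ediv_nonneg (by omega) hd, ?_⟩
  rcases hd.eq_or_lt with hd | hd
  · simp [blockIdx, ← hd]
  · exact Int.ediv_le_ediv hd (by omega)

theorem sum_sum_block {M : Type*} [AddCommMonoid M] (n p q : Fin N → ℕ) (δ : Fin N → Bool)
    (f : (Fin N → ℤ) → M) :
    ∑ r ∈ blockRange n p q, ∑ s ∈ block n p q δ r, f s =
      ∑ s ∈ obsIdx n with blockType p q s = δ, f s := by
  rw [← Finset.sum_fiberwise_of_maps_to (g := blockIdx p q) fun s hs =>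
    blockIdx_mem_blockRange p q (Finset.mem_filter.mp hs).1]
  simp only [block, Finset.filter_filter]

theorem sum_obsIdx_eq {M : Type*} [AddCommMonoid M] (n p q : Fin N → ℕ) (f : (Fin N → ℤ) → M) :
    ∑ s ∈ obsIdx n, f s =
      ∑ δ : Fin N → Bool, ∑ r ∈ blockRange n p q, ∑ s ∈ block n p q δ r, f s := by
  simp only [sum_sum_block, Finset.sum_fiberwise]

theorem card_obsIdx (n : Fin N → ℕ) : (obsIdx n).card = ∏ i, n i := by
  simp [obsIdx, Pi.card_Icc]

theorem sum_card_block_le (n p q : Fin N → ℕ) (δ : Fin N → Bool) :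
    ∑ r ∈ blockRange n p q, (block n p q δ r).card ≤ ∏ i, n i := by
  have hsum := sum_sum_block n p q δ fun _ => 1
  simp only [Finset.sum_const, smul_eq_mul, mul_one] at hsum
  rw [hsum, ← card_obsIdx]
  exact Finset.card_filter_le _ _

theorem card_blockRange_mul_le {n p : Fin N → ℕ} (q : Fin N → ℕ) (hpn : ∀ i, p i ≤ n i) :
    (blockRange n p q).card * ∏ i, p i ≤ 2 ^ N * ∏ i, n i := by
  have h2 : (2 : ℕ) ^ N = ∏ _i : Fin N, 2 := by simp
  rw [blockRange, Fintype.card_piFinset, h2, ← Finset.prod_mul_distrib, ← Finset.prod_mul_distrib]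
  refine Finset.prod_le_prod' fun i _ => ?_
  have hside : (Finset.Icc 0 ((n i : ℤ) / (p i + q i))).card = n i / (p i + q i) + 1 := by
    rw [Int.card_Icc, sub_zero]; norm_cast
  calc (Finset.Icc 0 ((n i : ℤ) / (p i + q i))).card * p i
      = n i / (p i + q i) * p i + p i := by rw [hside, add_one_mul]
    _ ≤ n i / (p i + q i) * (p i + q i) + n i :=
        add_le_add (Nat.mul_le_mul_left _ (Nat.le_add_right _ _)) (hpn i)
    _ ≤ 2 * n i := by linarith [Nat.div_mul_le_self (n i) (p i + q i)]

variable {n p q : Fin N → ℕ} {δ : Fin N → Bool} {r r' s t : Fin N → ℤ}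

theorem emod_lt_iff_of_mem_block (hs : s ∈ block n p q δ r) (ht : t ∈ block n p q δ r')
    (i : Fin N) : (s i - 1) % (p i + q i : ℤ) < p i ↔ (t i - 1) % (p i + q i : ℤ) < p i :=
  decide_eq_decide.mp <|
    congrFun ((mem_block.mp hs).2.1.trans (mem_block.mp ht).2.1.symm) i

theorem natAbs_sub_lt_of_mem_block (hp : ∀ i, 0 < p i) (hqp : ∀ i, q i ≤ p i)
    (hs : s ∈ block n p q δ r) (ht : t ∈ block n p q δ r) (i : Fin N) :
    (s i - t i).natAbs < p i := by
  simpa using natAbs_sub_lt_of_ediv_eq (hp i) (hqp i) (emod_lt_iff_of_mem_block hs ht i)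
    (congrFun ((mem_block.mp hs).2.2.trans (mem_block.mp ht).2.2.symm) i)

theorem card_block_le (hp : ∀ i, 0 < p i) (hqp : ∀ i, q i ≤ p i) (δ : Fin N → Bool)
    (r : Fin N → ℤ) : (block n p q δ r).card ≤ ∏ i, p i :=
  card_le_prod_of_natAbs_sub_lt hp fun _ hs _ ht => natAbs_sub_lt_of_mem_block hp hqp hs ht

theorem latDist_le_of_mem_block (hp : ∀ i, 0 < p i) (hqp : ∀ i, q i ≤ p i) {pmax : ℕ}
    (hpmax : ∀ i, p i ≤ pmax) (hs : s ∈ block n p q δ r) (ht : t ∈ block n p q δ r) :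
    latDist s t ≤ pmax :=
  latDist_le_iff.mpr fun i => (natAbs_sub_lt_of_mem_block hp hqp hs ht i).le.trans (hpmax i)

theorem le_latDist_of_mem_block (hp : ∀ i, 0 < p i) (hqp : ∀ i, q i ≤ p i) {qmin : ℕ}
    (hqmin : ∀ i, qmin ≤ q i) (hr : r ≠ r') (hs : s ∈ block n p q δ r)
    (ht : t ∈ block n p q δ r') : qmin ≤ latDist s t := by
  obtain ⟨i, hi⟩ := Function.ne_iff.mp hr
  rw [← (mem_block.mp hs).2.2, ← (mem_block.mp ht).2.2] at hi
  have hsep := le_natAbs_sub_of_ediv_ne (hp i) (hqp i) (emod_lt_iff_of_mem_block hs ht i) hi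
  rw [sub_sub_sub_cancel_right] at hsep
  exact ((hqmin i).trans hsep).trans (natAbs_sub_le_latDist s t i)

theorem pairwiseSeparated_block (hp : ∀ i, 0 < p i) (hqp : ∀ i, q i ≤ p i) {qmin : ℕ}
    (hqmin : ∀ i, qmin ≤ q i) (δ : Fin N → Bool) (T : Set (Fin N → ℤ)) :
    PairwiseSeparated qmin (fun r => (block n p q δ r : Set (Fin N → ℤ))) T :=
  fun _ _ _ _ hr _ hs _ ht => le_latDist_of_mem_block hp hqp hqmin hr hs ht

end Blocks

/-- The exponent by which the dependence between the blocks with sides `p i` of the window with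
sides `n i` enters the Bernstein inequality, `k` being a lower bound for the distance between two
blocks. -/
def mixingExponent {N : ℕ} {Ω E : Type*} [MeasurableSpace Ω] [MeasurableSpace E] (P : Measure Ω)
    (Z : (Fin N → ℤ) → Ω → E) (n p : Fin N → ℕ) (k : ℕ) : ℝ :=
  2 ^ N * ((∏ i, (n i : ℝ)) / ∏ i, (p i : ℝ)) *
    alphaMix P Z k ^ ((∏ i, (p i : ℝ)) / ((∏ i, (n i : ℝ)) * (2 ^ N + 1)))

namespace BoundedCentredField

variable {N : ℕ} {Ω E : Type*} [MeasurableSpace Ω] [MeasurableSpace E] {P : Measure Ω}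
  {Z : (Fin N → ℤ) → Ω → E} {Y : (Fin N → ℤ) → Ω → ℝ} {b σ2 θ : ℝ}
  {n p q : Fin N → ℕ} {qmin pmax : ℕ}

theorem neg (h : BoundedCentredField P Z Y b σ2) :
    BoundedCentredField P Z (fun s ω => -Y s ω) b σ2 where
  measurable_base := h.measurable_base
  measurable_comap s := (h.measurable_comap s).neg
  abs_le_bound s ω := (abs_neg _).trans_le (h.abs_le_bound s ω)
  integral_eq_zero s := by rw [integral_neg, h.integral_eq_zero, neg_zero]
  variance_le s := variance_fun_neg.trans_le (h.variance_le s)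

variable [IsProbabilityMeasure P]

theorem mgf_sum_blocks_of_type_le (h : BoundedCentredField P Z Y b σ2) (hp : ∀ i, 0 < p i)
    (hqp : ∀ i, q i ≤ p i) (hpn : ∀ i, p i ≤ n i) (hqmin : ∀ i, qmin ≤ q i)
    (hpmax : ∀ i, p i ≤ pmax) (hθ : 0 ≤ θ) (hsmall : θ * ((∏ i, (p i : ℝ)) * b) ≤ 1 / 2)
    (δ : Fin N → Bool) :
    mgf (fun ω => ∑ r ∈ blockRange n p q, ∑ s ∈ block n p q δ r, Y s ω) P θ ≤
      Real.exp (mixingExponent P Z n p qmin) *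
        Real.exp (θ ^ 2 * ((∏ i, (n i : ℝ)) * varianceRate P Z b σ2 pmax)) := by
  have hp0 : 0 < ∏ i, (p i : ℝ) := Finset.prod_pos fun i _ => by exact_mod_cast hp i
  have hpn' : ∏ i, (p i : ℝ) ≤ ∏ i, (n i : ℝ) :=
    Finset.prod_le_prod (fun i _ => by positivity) fun i _ => by exact_mod_cast hpn i
  have hn0 : 0 < ∏ i, (n i : ℝ) := hp0.trans_le hpn'
  have hrange : ((blockRange n p q).card : ℝ) * ∏ i, (p i : ℝ) ≤ 2 ^ N * ∏ i, (n i : ℝ) := by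
    exact_mod_cast card_blockRange_mul_le q hpn
  have hx : (∏ i, (p i : ℝ)) / ((∏ i, (n i : ℝ)) * (2 ^ N + 1)) *
      ((blockRange n p q).card + 1) ≤ 1 := by
    rw [div_mul_eq_mul_div, div_le_one (by positivity)]
    linarith
  have hcard : ((∑ r ∈ blockRange n p q, (block n p q δ r).card : ℕ) : ℝ) ≤ ∏ i, (n i : ℝ) := by
    exact_mod_cast sum_card_block_le n p q δ
  have hα := Real.rpow_nonneg (alphaMix_nonneg (P := P) (Z := Z) qmin)
    ((∏ i, (p i : ℝ)) / ((∏ i, (n i : ℝ)) * (2 ^ N + 1)))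
  have hrate := h.varianceRate_nonneg pmax
  refine (h.mgf_sum_blocks_le (pairwiseSeparated_block hp hqp hqmin δ _)
    (fun r s hs t ht => latDist_le_of_mem_block hp hqp hpmax hs ht)
    (card_block_le hp hqp δ) hθ (by exact_mod_cast hsmall) hx).trans ?_
  rw [mixingExponent, mul_div_assoc']
  gcongr
  exact (le_div_iff₀ hp0).mpr hrange

theorem mgf_sum_obsIdx_le (h : BoundedCentredField P Z Y b σ2) (hp : ∀ i, 0 < p i)
    (hqp : ∀ i, q i ≤ p i) (hpn : ∀ i, p i ≤ n i) (hqmin : ∀ i, qmin ≤ q i)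
    (hpmax : ∀ i, p i ≤ pmax) (hθ : 0 ≤ θ)
    (hsmall : 2 ^ N * θ * ((∏ i, (p i : ℝ)) * b) ≤ 1 / 2) :
    mgf (fun ω => ∑ s ∈ obsIdx n, Y s ω) P θ ≤
      Real.exp (mixingExponent P Z n p qmin) *
        Real.exp ((2 ^ N * θ) ^ 2 * ((∏ i, (n i : ℝ)) * varianceRate P Z b σ2 pmax)) := by
  have hcard : (Fintype.card (Fin N → Bool) : ℝ) = 2 ^ N := by simp
  simp only [sum_obsIdx_eq n p q]
  refine mgf_sum_le_of_mgf_le (fun δ => ?_) fun δ => ?_ <;> rw [hcard]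
  · simp only [sum_sum_block]
    exact h.integrable_exp_mul_sum _ _
  · exact h.mgf_sum_blocks_of_type_le hp hqp hpn hqmin hpmax (by positivity) hsmall δ

theorem measureReal_le_abs_sum_obsIdx_le (h : BoundedCentredField P Z Y b σ2)
    (hp : ∀ i, 0 < p i) (hqp : ∀ i, q i ≤ p i) (hpn : ∀ i, p i ≤ n i) (hqmin : ∀ i, qmin ≤ q i)
    (hpmax : ∀ i, p i ≤ pmax) (hθ : 0 ≤ θ)
    (hsmall : 2 ^ N * θ * ((∏ i, (p i : ℝ)) * b) ≤ 1 / 2) (η : ℝ) :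
    P.real {ω | η ≤ |∑ s ∈ obsIdx n, Y s ω|} ≤
      2 * Real.exp (mixingExponent P Z n p qmin) * Real.exp (-θ * η) *
        Real.exp ((2 ^ N * θ) ^ 2 * ((∏ i, (n i : ℝ)) * varianceRate P Z b σ2 pmax)) := by
  have hupper := h.mgf_sum_obsIdx_le hp hqp hpn hqmin hpmax hθ hsmall
  have hlower := h.neg.mgf_sum_obsIdx_le hp hqp hpn hqmin hpmax hθ hsmall
  simp only [Finset.sum_neg_distrib] at hlower
  refine (measureReal_le_abs_le_two_mul_exp_mul hθ (h.integrable_exp_mul_sum _ θ)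
    (h.integrable_exp_mul_sum _ (-θ)) hupper (mgf_neg.symm.trans_le hlower)).trans_eq ?_
  ring

end BoundedCentredField

section Tail

theorem integrableOn_Ioi_exp_neg_mul_rpow {κ τ B : ℝ} (hκ : 0 < κ) (hτ : 0 < τ) (hB : 0 ≤ B) :
    IntegrableOn (fun x : ℝ => Real.exp (-κ * x ^ τ)) (Set.Ioi B) := by
  have h := integrableOn_rpow_mul_exp_neg_mul_rpow (s := 0) (by norm_num) hτ hκ
  simp only [Real.rpow_zero, one_mul] at h
  exact h.mono_set (Set.Ioi_subset_Ioi hB)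

theorem uGamma_one_div_mul_rpow {κ τ B : ℝ} (hκ : 0 < κ) (hτ : 0 < τ) (hB : 0 ≤ B) :
    uGamma (1 / τ) (κ * B ^ τ) = τ * κ ^ (1 / τ) * ∫ x in Set.Ioi B, Real.exp (-κ * x ^ τ) := by
  have hBτ : (B ^ τ) ^ τ⁻¹ = B := Real.rpow_rpow_inv hB hτ.ne'
  have key {x : ℝ} (hx : 0 < x) :
      κ * (τ * x ^ (τ - 1) * (κ * x ^ τ) ^ (1 / τ - 1)) = τ * κ ^ (1 / τ) := by
    rw [Real.mul_rpow hκ.le (by positivity), ← Real.rpow_mul hx.le, Real.rpow_sub_one hκ.ne',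
      mul_sub, mul_one_div_cancel hτ.ne', mul_one, ← neg_sub τ 1, Real.rpow_neg hx.le]
    field_simp
  rw [uGamma, ← integral_comp_mul_left_Ioi' _ _ hκ,
    ← integral_comp_rpow_Ioi_of_pos' hτ (Real.rpow_nonneg hB τ), hBτ, smul_eq_mul,
    ← integral_const_mul, ← integral_const_mul]
  refine setIntegral_congr_fun measurableSet_Ioi fun x hx => ?_
  rw [← key (hB.trans_lt hx), smul_eq_mul, neg_mul]
  ring

theorem integral_Ioi_exp_neg_mul_rpow {κ τ B : ℝ} (hκ : 0 < κ) (hτ : 0 < τ) (hB : 0 ≤ B) :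
    ∫ x in Set.Ioi B, Real.exp (-κ * x ^ τ) =
      1 / τ * κ ^ (-(1 : ℝ) / τ) * uGamma (1 / τ) (κ * B ^ τ) := by
  rw [uGamma_one_div_mul_rpow hκ hτ hB, neg_div, Real.rpow_neg hκ.le]
  field_simp

/-- Truncation of a real number to `[-B, B]`. -/
def clip (B x : ℝ) : ℝ := max (-B) (min x B)

theorem measurable_clip (B : ℝ) : Measurable (clip B) := by
  unfold clip
  fun_prop

theorem abs_clip {B : ℝ} (hB : 0 ≤ B) (x : ℝ) : |clip B x| = min |x| B := by
  unfold clip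
  grind

theorem abs_sub_clip {B : ℝ} (hB : 0 ≤ B) (x : ℝ) : |x - clip B x| = max (|x| - B) 0 := by
  unfold clip
  grind

theorem abs_clip_le {B : ℝ} (hB : 0 ≤ B) (x : ℝ) : |clip B x| ≤ B :=
  (abs_clip hB x).trans_le (min_le_right _ _)

theorem clip_sq_le {B : ℝ} (hB : 0 ≤ B) (x : ℝ) : clip B x ^ 2 ≤ x ^ 2 :=
  sq_le_sq.mpr ((abs_clip hB x).trans_le (min_le_left _ _))

/-- The tail condition `P (|X| > z) ≤ κ0 exp (-κ1 z ^ τ)`. -/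
def StretchedExpTail {Ω : Type*} [MeasurableSpace Ω] (P : Measure Ω) (X : Ω → ℝ)
    (κ0 κ1 τ : ℝ) : Prop :=
  ∀ z : ℝ, 0 ≤ z → P {ω | z < |X ω|} ≤ ENNReal.ofReal (κ0 * Real.exp (-κ1 * z ^ τ))

variable {Ω : Type*} [MeasurableSpace Ω] {P : Measure Ω}
  {X : Ω → ℝ} {κ0 κ1 τ B : ℝ}

namespace StretchedExpTail

theorem memLp_two (h : StretchedExpTail P X κ0 κ1 τ) (hX : Measurable X) (h1 : 0 < κ1)
    (hτ : 0 < τ) : MemLp X 2 P := by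
  have hint := (integrableOn_Ioi_exp_neg_mul_rpow h1 (half_pos hτ) le_rfl).const_mul κ0
  have hsq : 0 ≤ᵐ[P] fun ω => X ω ^ 2 := .of_forall fun ω => sq_nonneg _
  refine (memLp_two_iff_integrable_sq hX.aestronglyMeasurable).mpr
    ⟨(hX.pow_const 2).aestronglyMeasurable, ?_⟩
  rw [hasFiniteIntegral_iff_ofReal hsq,
    lintegral_eq_lintegral_meas_lt P hsq (hX.pow_const 2).aemeasurable]
  refine (setLIntegral_mono (by fun_prop) fun t ht => ?_).trans_lt hint.lintegral_lt_top
  have ht0 : (0 : ℝ) ≤ t := le_of_lt ht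
  have hroot : {ω | t < X ω ^ 2} = {ω | √t < |X ω|} := by
    ext ω
    rw [Set.mem_ofPred_eq, Set.mem_ofPred_eq, ← Real.sqrt_sq_eq_abs, Real.sqrt_lt_sqrt_iff ht0]
  rw [hroot]
  refine (h _ (Real.sqrt_nonneg t)).trans_eq ?_
  rw [Real.sqrt_eq_rpow, ← Real.rpow_mul ht0, one_div_mul_eq_div]

theorem lintegral_sub_clip_le (h : StretchedExpTail P X κ0 κ1 τ) (hX : Measurable X)
    (hB : 0 ≤ B) :
    ∫⁻ ω, ENNReal.ofReal |X ω - clip B (X ω)| ∂P ≤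
      ∫⁻ x in Set.Ioi B, ENNReal.ofReal (κ0 * Real.exp (-κ1 * x ^ τ)) := by
  have hshift := (measurePreserving_add_right volume B).setLIntegral_comp_preimage
    (measurableSet_Ioi (a := B))
    (f := fun x => ENNReal.ofReal (κ0 * Real.exp (-κ1 * x ^ τ))) (by fun_prop)
  have hnonneg : 0 ≤ᵐ[P] fun ω => max (|X ω| - B) 0 := .of_forall fun ω => le_max_right _ _
  rw [← hshift, Set.preimage_add_const_Ioi, sub_self]
  simp only [abs_sub_clip hB]
  rw [lintegral_eq_lintegral_meas_lt P hnonneg (by fun_prop)]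
  refine setLIntegral_mono (by fun_prop) fun t (ht : 0 < t) => ?_
  refine (measure_mono fun ω hω => ?_).trans (h (t + B) (by positivity))
  exact lt_sub_iff_add_lt.mp ((lt_max_iff.mp hω).resolve_right ht.not_gt)

theorem integral_abs_sub_clip_le (h : StretchedExpTail P X κ0 κ1 τ) (hX : Measurable X)
    (h0 : 0 ≤ κ0) (h1 : 0 < κ1) (hτ : 0 < τ) (hB : 0 ≤ B) :
    ∫ ω, |X ω - clip B (X ω)| ∂P ≤
      κ0 * (1 / τ * κ1 ^ (-(1 : ℝ) / τ) * uGamma (1 / τ) (κ1 * B ^ τ)) := by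
  have hint := (integrableOn_Ioi_exp_neg_mul_rpow h1 hτ hB).const_mul κ0
  have hmeas : Measurable fun ω => |X ω - clip B (X ω)| :=
    (hX.sub ((measurable_clip B).comp hX)).abs
  rw [← integral_Ioi_exp_neg_mul_rpow h1 hτ hB, ← integral_const_mul,
    integral_eq_lintegral_of_nonneg_ae (.of_forall fun ω => abs_nonneg _)
      hmeas.aestronglyMeasurable,
    integral_eq_lintegral_of_nonneg_ae (.of_forall fun x => by positivity) hint.1]
  exact ENNReal.toReal_mono hint.lintegral_lt_top.ne (h.lintegral_sub_clip_le hX hB)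

end StretchedExpTail

end Tail

section CentredClip

variable {ι Ω : Type*} [MeasurableSpace Ω] {P : Measure Ω}

theorem integral_abs_sub_integral_le [IsProbabilityMeasure P] {D : Ω → ℝ} (hD : Integrable D P) :
    ∫ ω, |D ω - ∫ ω', D ω' ∂P| ∂P ≤ 2 * ∫ ω, |D ω| ∂P := by
  calc ∫ ω, |D ω - ∫ ω', D ω' ∂P| ∂P ≤ ∫ ω, (|D ω| + |∫ ω', D ω' ∂P|) ∂P :=
        integral_mono (hD.sub (integrable_const _)).abs (hD.abs.add (integrable_const _))
          fun ω => abs_sub _ _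
    _ = ∫ ω, |D ω| ∂P + |∫ ω, D ω ∂P| := by
        rw [integral_add hD.abs (integrable_const _)]
        simp
    _ ≤ 2 * ∫ ω, |D ω| ∂P := by
        linarith [abs_integral_le_integral_abs (f := D) (μ := P)]

theorem measureReal_le_abs_sum_le {R : ι → Ω → ℝ} {L η : ℝ} (hη : 0 < η)
    (hR : ∀ i, Integrable (R i) P) (hL : ∀ i, ∫ ω, |R i ω| ∂P ≤ L) (T : Finset ι) :
    P.real {ω | η ≤ |∑ i ∈ T, R i ω|} ≤ T.card * L / η := by
  have hsum : Integrable (fun ω => |∑ i ∈ T, R i ω|) P :=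
    (integrable_finsetSum _ fun i _ => hR i).abs
  rw [le_div_iff₀' hη]
  calc η * P.real {ω | η ≤ |∑ i ∈ T, R i ω|} ≤ ∫ ω, |∑ i ∈ T, R i ω| ∂P :=
        mul_meas_ge_le_integral_of_nonneg (.of_forall fun ω => abs_nonneg _) hsum η
    _ ≤ ∫ ω, ∑ i ∈ T, |R i ω| ∂P :=
        integral_mono hsum (integrable_finsetSum _ fun i _ => (hR i).abs)
          fun ω => Finset.abs_sum_le_sum_abs _ _
    _ = ∑ i ∈ T, ∫ ω, |R i ω| ∂P := integral_finsetSum _ fun i _ => (hR i).abs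
    _ ≤ T.card * L := by
        rw [← nsmul_eq_mul]
        exact Finset.sum_le_card_nsmul _ _ _ fun i _ => hL i

theorem measureReal_lt_abs_le_add [IsFiniteMeasure P] {a b c : ℝ} (habc : a + b ≤ c)
    (f g : Ω → ℝ) :
    P.real {ω | c < |f ω|} ≤ P.real {ω | a ≤ |f ω - g ω|} + P.real {ω | b ≤ |g ω|} := by
  refine (measureReal_mono fun ω (hω : c < |f ω|) => ?_).trans (measureReal_union_le _ _)
  by_contra! hcon
  obtain ⟨h1, h2⟩ := not_or.mp hcon
  rw [Set.mem_ofPred_eq, not_le] at h1 h2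
  linarith [abs_sub_abs_le_abs_sub (f ω) (g ω)]

/-- The truncation of a random variable to `[-B, B]`, centred. -/
def centredClip (P : Measure Ω) (B : ℝ) (X : Ω → ℝ) (ω : Ω) : ℝ :=
  clip B (X ω) - ∫ ω', clip B (X ω') ∂P

variable [IsProbabilityMeasure P] {X : Ω → ℝ} {κ0 κ1 τ B : ℝ}

theorem integrable_clip (hX : AEMeasurable X P) (hB : 0 ≤ B) :
    Integrable (fun ω => clip B (X ω)) P :=
  .of_bound ((measurable_clip B).comp_aemeasurable hX).aestronglyMeasurable B
    (.of_forall fun _ => abs_clip_le hB _)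

theorem abs_centredClip_le (hB : 0 ≤ B) (X : Ω → ℝ) (ω : Ω) : |centredClip P B X ω| ≤ 2 * B := by
  have hmean : |∫ ω', clip B (X ω') ∂P| ≤ B := by
    simpa using norm_integral_le_of_norm_le_const (μ := P) (f := fun ω' => clip B (X ω'))
      (.of_forall fun ω' => abs_clip_le hB (X ω'))
  unfold centredClip
  linarith [abs_sub (clip B (X ω)) (∫ ω', clip B (X ω') ∂P), abs_clip_le hB (X ω)]

theorem integral_centredClip (hX : AEMeasurable X P) (hB : 0 ≤ B) :
    ∫ ω, centredClip P B X ω ∂P = 0 := by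
  unfold centredClip
  rw [integral_sub (integrable_clip hX hB) (integrable_const _)]
  simp

theorem variance_centredClip_le (hX : MemLp X 2 P) (hB : 0 ≤ B) :
    Var[centredClip P B X; P] ≤ ∫ ω, X ω ^ 2 ∂P := by
  have hclip : AEStronglyMeasurable (fun ω => clip B (X ω)) P :=
    ((measurable_clip B).comp_aemeasurable hX.aemeasurable).aestronglyMeasurable
  calc Var[centredClip P B X; P] = Var[fun ω => clip B (X ω); P] :=
        variance_sub_const hclip _
    _ ≤ ∫ ω, clip B (X ω) ^ 2 ∂P := variance_le_expectation_sq hclip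
    _ ≤ ∫ ω, X ω ^ 2 ∂P :=
        integral_mono_of_nonneg (.of_forall fun ω => sq_nonneg _) hX.integrable_sq
          (.of_forall fun ω => clip_sq_le hB _)

theorem integral_abs_sub_centredClip_le (hX : Integrable X P) (h0 : ∫ ω, X ω ∂P = 0)
    (hB : 0 ≤ B) :
    ∫ ω, |X ω - centredClip P B X ω| ∂P ≤ 2 * ∫ ω, |X ω - clip B (X ω)| ∂P := by
  have hclip := integrable_clip hX.aemeasurable hB
  have key := integral_abs_sub_integral_le (hX.sub hclip)
  simp only [Pi.sub_apply, integral_sub hX hclip, h0, zero_sub, sub_neg_eq_add] at key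
  simpa only [centredClip, sub_sub_eq_add_sub, sub_add_eq_add_sub] using key

theorem boundedCentredField_centredClip {Z : ι → Ω → ℝ} {σ2 : ℝ} (hZ : ∀ s, Measurable (Z s))
    (hZ2 : ∀ s, MemLp (Z s) 2 P) (hσ2 : ∀ s, ∫ ω, Z s ω ^ 2 ∂P ≤ σ2) (hB : 0 ≤ B) :
    BoundedCentredField P Z (fun s => centredClip P B (Z s)) (2 * B) σ2 where
  measurable_base := hZ
  measurable_comap s := ((measurable_clip B).comp (comap_measurable (Z s))).sub_const _
  abs_le_bound s := abs_centredClip_le hB (Z s)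
  integral_eq_zero s := integral_centredClip (hZ s).aemeasurable hB
  variance_le s := (variance_centredClip_le (hZ2 s) hB).trans (hσ2 s)

theorem measureReal_le_abs_sum_sub_centredClip_le {Z : ι → Ω → ℝ} {η : ℝ}
    (hZ : ∀ s, Measurable (Z s)) (hmean : ∀ s, ∫ ω, Z s ω ∂P = 0)
    (htail : ∀ s, StretchedExpTail P (Z s) κ0 κ1 τ) (h0 : 0 ≤ κ0) (h1 : 0 < κ1) (hτ : 0 < τ)
    (hB : 0 ≤ B) (hη : 0 < η) (T : Finset ι) :
    P.real {ω | η ≤ |∑ s ∈ T, Z s ω - ∑ s ∈ T, centredClip P B (Z s) ω|} ≤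
      2 / (η * τ) * κ0 * κ1 ^ (-(1 : ℝ) / τ) * uGamma (1 / τ) (κ1 * B ^ τ) * T.card := by
  have hint (s : ι) : Integrable (Z s) P :=
    ((htail s).memLp_two (hZ s) h1 hτ).integrable one_le_two
  simp only [← Finset.sum_sub_distrib]
  refine (measureReal_le_abs_sum_le hη
    (fun s => (hint s).sub ((integrable_clip (hZ s).aemeasurable hB).sub (integrable_const _)))
    (fun s => (integral_abs_sub_centredClip_le (hint s) (hmean s) hB).trans
      (mul_le_mul_of_nonneg_left ((htail s).integral_abs_sub_clip_le (hZ s) h0 h1 hτ hB)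
        zero_le_two)) T).trans_eq ?_
  field_simp

end CentredClip

section Main

variable {N : ℕ} {Ω : Type*} [MeasurableSpace Ω] {P : Measure Ω} {Z : (Fin N → ℤ) → Ω → ℝ}

theorem mixingExponent_le (n p : Fin N → ℕ) (k : ℕ) :
    mixingExponent P Z n p k ≤
      12 * √(Real.exp 1) * 2 ^ N * ((∏ i, (n i : ℝ)) / ∏ i, (p i : ℝ)) *
        alphaMix P Z k ^ ((∏ i, (p i : ℝ)) / ((∏ i, (n i : ℝ)) * (2 ^ N + 1))) := by
  have hα := Real.rpow_nonneg (alphaMix_nonneg (P := P) (Z := Z) k)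
    ((∏ i, (p i : ℝ)) / ((∏ i, (n i : ℝ)) * (2 ^ N + 1)))
  have hconst : 1 ≤ 12 * √(Real.exp 1) := by
    linarith [Real.one_le_sqrt.mpr (Real.one_le_exp zero_le_one)]
  unfold mixingExponent
  gcongr
  exact le_mul_of_one_le_left (by positivity) hconst

theorem sq_mul_varianceRate_le {B σ2 β v : ℝ} (hσ2 : 0 ≤ σ2) (hv : 0 ≤ v) (k : ℕ) :
    (2 ^ N * β) ^ 2 * (v * varianceRate P Z (2 * B) σ2 k) ≤
      2 ^ (3 * N) * β ^ 2 * Real.exp 1 * (σ2 + 48 * B ^ 2 * sphereConst N * abar P Z k) * v := by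
  have hA : 0 ≤ B ^ 2 * sphereConst N * abar P Z k :=
    mul_nonneg (mul_nonneg (sq_nonneg B) (sphereConst_nonneg N)) (abar_nonneg k)
  have hrate : varianceRate P Z (2 * B) σ2 k ≤ σ2 + 48 * B ^ 2 * sphereConst N * abar P Z k := by
    unfold varianceRate
    linarith
  have hpow : ((2 : ℝ) ^ N) ^ 2 ≤ 2 ^ (3 * N) * Real.exp 1 := by
    rw [← pow_mul, mul_comm N 2, ← mul_one ((2 : ℝ) ^ (2 * N))]
    gcongr
    · exact one_le_two
    · norm_num
    · exact Real.one_le_exp zero_le_one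
  have hbase : 0 ≤ σ2 + 48 * B ^ 2 * sphereConst N * abar P Z k := by linarith
  calc (2 ^ N * β) ^ 2 * (v * varianceRate P Z (2 * B) σ2 k)
      ≤ (2 ^ N * β) ^ 2 * (v * (σ2 + 48 * B ^ 2 * sphereConst N * abar P Z k)) := by gcongr
    _ = (2 ^ N) ^ 2 * (β ^ 2 * (v * (σ2 + 48 * B ^ 2 * sphereConst N * abar P Z k))) := by ring
    _ ≤ 2 ^ (3 * N) * Real.exp 1 *
        (β ^ 2 * (v * (σ2 + 48 * B ^ 2 * sphereConst N * abar P Z k))) := by gcongr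
    _ = _ := by ring

theorem measureReal_le_abs_sum_centredClip_le [IsProbabilityMeasure P] {σ2 B ε β : ℝ}
    {n p q : Fin N → ℕ} {qmin pmax : ℕ} (hZ : ∀ s, Measurable (Z s)) (hZ2 : ∀ s, MemLp (Z s) 2 P)
    (hvar : ∀ s, ∫ ω, Z s ω ^ 2 ∂P ≤ σ2) (hp : ∀ i, 0 < p i) (hqp : ∀ i, q i ≤ p i)
    (hpn : ∀ i, p i ≤ n i) (hqmin : ∀ i, qmin ≤ q i) (hpmax : ∀ i, p i ≤ pmax) (hB : 0 ≤ B)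
    (hβ : 0 ≤ β) (hsmall : 2 ^ (N + 1) * B * (∏ i, (p i : ℝ)) * Real.exp 1 * β ≤ 1) :
    P.real {ω | ε / 3 ≤ |∑ s ∈ obsIdx n, centredClip P B (Z s) ω|} ≤
      2 * Real.exp (12 * √(Real.exp 1) * 2 ^ N * ((∏ i, (n i : ℝ)) / ∏ i, (p i : ℝ)) *
          alphaMix P Z qmin ^ ((∏ i, (p i : ℝ)) / ((∏ i, (n i : ℝ)) * (2 ^ N + 1)))) *
        Real.exp (-β * ε / 3) *
        Real.exp (2 ^ (3 * N) * β ^ 2 * Real.exp 1 *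
          (σ2 + 48 * B ^ 2 * sphereConst N * abar P Z pmax) * ∏ i, (n i : ℝ)) := by
  have hσ2 : 0 ≤ σ2 := (integral_nonneg fun ω => sq_nonneg _).trans (hvar 0)
  have hsmall' : 2 ^ N * β * ((∏ i, (p i : ℝ)) * (2 * B)) ≤ 1 / 2 := by
    have hnonneg : 0 ≤ 2 ^ N * β * ((∏ i, (p i : ℝ)) * (2 * B)) := by positivity
    have he : (2 : ℝ) ≤ Real.exp 1 := by linarith [Real.add_one_le_exp (1 : ℝ)]
    rw [pow_succ] at hsmall
    linarith [mul_le_mul_of_nonneg_left he hnonneg]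
  have hbound := (boundedCentredField_centredClip hZ hZ2 hvar hB).measureReal_le_abs_sum_obsIdx_le
    hp hqp hpn hqmin hpmax hβ hsmall' (ε / 3)
  have hmix := mixingExponent_le (P := P) (Z := Z) n p qmin
  have hrate := sq_mul_varianceRate_le (N := N) (P := P) (Z := Z) (B := B) (β := β) hσ2
    (v := ∏ i, (n i : ℝ)) (by positivity) pmax
  rw [← mul_div_assoc (-β)] at hbound
  refine hbound.trans ?_
  gcongr

theorem bernstein_spatial_lattice_unbounded_general [IsProbabilityMeasure P]
    (hZ : ∀ s, Measurable (Z s)) {σ2 κ0 κ1 τ : ℝ} (h0 : 0 ≤ κ0) (h1 : 0 < κ1) (hτ : 0 < τ)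
    (hmean : ∀ s, ∫ ω, Z s ω ∂P = 0) (hvar : ∀ s, ∫ ω, Z s ω ^ 2 ∂P ≤ σ2)
    (htail : ∀ s, StretchedExpTail P (Z s) κ0 κ1 τ) {n p q : Fin N → ℕ} {qmin pmax : ℕ}
    (hp : ∀ i, 0 < p i) (hqp : ∀ i, q i ≤ p i) (hpn : ∀ i, p i ≤ n i) (hqmin : ∀ i, qmin ≤ q i)
    (hpmax : ∀ i, p i ≤ pmax) {B ε β : ℝ} (hB : 0 ≤ B) (hε : 0 < ε) (hβ : 0 ≤ β)
    (hsmall : 2 ^ (N + 1) * B * (∏ i, (p i : ℝ)) * Real.exp 1 * β ≤ 1) :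
    P {ω | ε < |∑ s ∈ obsIdx n, Z s ω|} ≤ ENNReal.ofReal
      (12 / (ε * τ) * κ0 * κ1 ^ (-(1 : ℝ) / τ) * uGamma (1 / τ) (κ1 * B ^ τ) * (obsIdx n).card +
        2 * Real.exp (12 * √(Real.exp 1) * 2 ^ N * ((∏ i, (n i : ℝ)) / ∏ i, (p i : ℝ)) *
            alphaMix P Z qmin ^ ((∏ i, (p i : ℝ)) / ((∏ i, (n i : ℝ)) * (2 ^ N + 1)))) *
          Real.exp (-β * ε / 3) *
          Real.exp (2 ^ (3 * N) * β ^ 2 * Real.exp 1 *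
            (σ2 + 48 * B ^ 2 * sphereConst N * abar P Z pmax) * ∏ i, (n i : ℝ))) := by
  have hZ2 (s : Fin N → ℤ) := (htail s).memLp_two (hZ s) h1 hτ
  have hbounded := measureReal_le_abs_sum_centredClip_le (ε := ε) hZ hZ2 hvar hp hqp hpn hqmin
    hpmax hB hβ hsmall
  -- The threshold `ε / 6` is the one for which Markov's inequality gives the constant `12`.
  have hremainder := measureReal_le_abs_sum_sub_centredClip_le (η := ε / 6) hZ hmean htail h0 h1 hτ
    hB (by positivity) (obsIdx n)
  have hconst : 2 / (ε / 6 * τ) = 12 / (ε * τ) := by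
    field_simp
    norm_num
  rw [hconst] at hremainder
  rw [← ofReal_measureReal]
  exact ENNReal.ofReal_le_ofReal <|
    (measureReal_lt_abs_le_add (by linarith) _ _).trans (add_le_add hremainder hbounded)

end Main

/-- Extended Bernstein inequality for unbounded variables. -/
theorem bernstein_spatial_lattice_unbounded (N : ℕ) (hN : 0 < N) :
    ∃ γc : ℝ, ∀ (Ω : Type) (_ : MeasurableSpace Ω) (P : Measure Ω),
      IsProbabilityMeasure P →
      ∀ (Z : (Fin N → ℤ) → Ω → ℝ), (∀ s, Measurable (Z s)) →
      -- strong mixing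
      Tendsto (alphaMix P Z) atTop (nhds 0) →
      ∀ (σ2 κ0 κ1 τ : ℝ), 0 < κ0 → 0 < κ1 → 0 < τ →
      (∀ s, ∫ ω, Z s ω ∂P = 0) →
      (∀ s, ∫ ω, (Z s ω) ^ 2 ∂P ≤ σ2) →
      -- tail condition `P(|Z(s)| > z) ≤ κ0 exp(−κ1 z^τ)`
      (∀ s, ∀ z : ℝ, 0 ≤ z →
        P {ω | z < |Z s ω|} ≤ ENNReal.ofReal (κ0 * Real.exp (-κ1 * z ^ τ))) →
      ∀ (n : Fin N → ℕ) (Pseq Qseq : Fin N → ℕ → ℕ),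
      (∀ i, Monotone (Pseq i)) → (∀ i, Monotone (Qseq i)) →
      (∀ i, 1 ≤ Qseq i (n i) ∧ Qseq i (n i) ≤ Pseq i (n i) ∧
        Pseq i (n i) < Qseq i (n i) + Pseq i (n i) ∧ Qseq i (n i) + Pseq i (n i) < n i) →
      ∀ (B ε β : ℝ), 0 < B → 0 < ε → 0 < β →
      2 ^ (N + 1) * B * (∏ i, (Pseq i (n i) : ℝ)) * Real.exp 1 * β < 1 →
      P {ω | ε < |∑ s ∈ obsIdx n, Z s ω|} ≤ ENNReal.ofReal
        (12 / (ε * τ) * κ0 * κ1 ^ (-(1 : ℝ) / τ) * uGamma (1 / τ) (κ1 * B ^ τ) *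
            ((obsIdx n).card : ℝ) +
          2 * Real.exp (12 * Real.sqrt (Real.exp 1) * 2 ^ N *
              ((∏ i, (n i : ℝ)) / ∏ i, (Pseq i (n i) : ℝ)) *
              (alphaMix P Z (Finset.univ.inf' (Finset.univ_nonempty_iff.mpr ⟨⟨0, hN⟩⟩)
                  fun i => Qseq i (n i))) ^
                ((∏ i, (Pseq i (n i) : ℝ)) / ((∏ i, (n i : ℝ)) * (2 ^ N + 1)))) *
            Real.exp (-β * ε / 3) *
            Real.exp (2 ^ (3 * N) * β ^ 2 * Real.exp 1 *
              (σ2 + 48 * B ^ 2 * γc *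
                abar P Z (Finset.univ.sup' (Finset.univ_nonempty_iff.mpr ⟨⟨0, hN⟩⟩)
                  fun i => Pseq i (n i))) *
              ∏ i, (n i : ℝ))) := by
  refine ⟨sphereConst N, ?_⟩
  intro Ω _ P _ Z hZ _ σ2 κ0 κ1 τ h0 h1 hτ hmean hvar htail n Pseq Qseq _ _ hPQ B ε β hB hε hβ hβB
  exact bernstein_spatial_lattice_unbounded_general hZ h0.le h1 hτ hmean hvar htail
    (fun i => (hPQ i).1.trans (hPQ i).2.1) (fun i => (hPQ i).2.1) (fun i => by grind)
    (fun i => Finset.inf'_le _ (Finset.mem_univ i))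
    (fun i => Finset.le_sup' (fun i => Pseq i (n i)) (Finset.mem_univ i)) hB.le hε hβ.le hβB.le
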